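/- Let (d,v,u) be an admissible triple for (λ,μ). Then ℓ(udv^{−1}) = ℓ(u) + ℓ(d) + ℓ(v^{−1}). -/

import Mathlib

/-!
The length of `w ∈ W_r` is the number of positive roots that `w` makes negative. Encoding the root
`e_q − e_p` by the pair `(p, q)` (with `e_{−i} = −e_i` and `e_0 = 0`), a positive root becomes a
pair `p < q` with `p + q ≠ 0`, and every root is represented by exactly two pairs: `(p, q)` and
`(−q, −p)`; for the short root `e_i` these are `(0, i)` and `(−i, 0)`. So twice the length is a
number of inversions (`two_mul_len`).

The count is additive on a product `x y` as soon as no positive root is made negative both by `x⁻¹`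
and by `y` (`inv2_mul`). An element of `W_A` permutes the blocks `{1,…,a}` and `{a+1,…,r}`,
preserving signs, so it can make negative only roots `e_q − e_p` with `p < q` in one block, and
such roots are sums of elements of `A`.

* For `d · v⁻¹`, additivity follows because `d⁻¹ ∈ D_Ã` keeps these roots positive.
* For `u · (d v⁻¹)`, it is enough that `d v⁻¹` keeps every `β ∈ B` positive. The root `β·d` is
  positive, and `v⁻¹` can only spoil this when `β·d = e_q − e_p` with `p < q` in one block for `a`.
  Since `d⁻¹` is increasing on that block and `β` is simple, `q = p + 1`; thus `β·d ∈ B·d ∩ A`,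
  and the elements of `B·d ∩ A` are kept positive by `v⁻¹`.
-/


/- The hyperoctahedral group `W_r` (the Weyl group of type `B_r`), realized as the group
of permutations `w` of `{±1, …, ±r}` satisfying `(−i)w = −(iw)`.  We realize its elements
inside `Equiv.Perm ℤ`, letting `w` act on `i` on the *right* via `i·w := w⁻¹ i` (so that
`i·(wd) = (i·w)·d` and products of group elements can be written in the same order as in
the paper). -/

namespace QQS

abbrev G : Type := Equiv.Perm ℤ

/-- The generators `s₀ = (1,−1)` and `sᵢ = (i,i+1)(−i,−i−1)`. -/
def s (i : ℕ) : G :=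
  if i = 0 then Equiv.swap 1 (-1)
  else Equiv.swap (i : ℤ) ((i : ℤ) + 1) * Equiv.swap (-(i : ℤ)) (-((i : ℤ) + 1))

/-- The generating set `{s₀, s₁, …, s_{r−1}}` of `W_r`. -/
def gens (r : ℕ) : Set G := {x | ∃ i, i < r ∧ x = s i}

/-- Membership in `W_r`: permutations of `{±1, …, ±r}` commuting with negation. -/
def inW (r : ℕ) (w : G) : Prop :=
  (∀ i : ℤ, w (-i) = -(w i)) ∧ ∀ i : ℤ, (r : ℤ) < |i| → w i = i

/-- The length `ℓ(w)` of `w ∈ W_r` with respect to the generators `s₀, …, s_{r−1}`. -/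
noncomputable def len (r : ℕ) (w : G) : ℕ :=
  sInf {n | ∃ l : List G, l.length = n ∧ (∀ x ∈ l, x ∈ gens r) ∧ l.prod = w}

/-- The partial sum of the first `k` parts of a composition. -/
def psum (l : List ℕ) (k : ℕ) : ℕ := (l.take k).sum

end QQS
namespace QQS

/- The root system of type `B_r`.  `W_r` acts on the vector space `V` with basis
`e₁, …, e_r`; we realize a vector `x = ∑ xᵢ eᵢ ∈ V` as the odd function `ℤ → ℚ` with
value `xᵢ` at `i` and `−xᵢ` at `−i`.  The (right) action of `w` on `V` determined by
`eᵢ·w = e_{i·w}` if `i·w > 0` and `eᵢ·w = −e_{−(i·w)}` if `i·w < 0` then becomes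
`x·w = x ∘ w`. -/

/-- The basis vector `eᵢ`, as an odd function `ℤ → ℚ`. -/
def evec (i : ℕ) : ℤ → ℚ := fun j => if j = (i : ℤ) then 1 else if j = -(i : ℤ) then -1 else 0

/-- The simple roots: `α₀ = e₁` and `αᵢ = e_{i+1} − eᵢ` for `i ≥ 1`. -/
def sroot : ℕ → (ℤ → ℚ)
  | 0 => evec 1
  | i + 1 => evec (i + 2) - evec (i + 1)

/-- `Δ₀ = {α₀, α₁, …, α_{r−1}}`. -/
def Delta0 (r : ℕ) : Set (ℤ → ℚ) := {x | ∃ i, i < r ∧ x = sroot i}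

/-- `Δ = Δ₀ ∖ {α₀}`. -/
def DeltaS (r : ℕ) : Set (ℤ → ℚ) := Delta0 r \ {sroot 0}

/-- The right action of `w ∈ W_r` on `V`: `x·w = x ∘ w`. -/
def rAct (w : G) (x : ℤ → ℚ) : ℤ → ℚ := fun j => x (w j)

/-- `x` is a positive root: `eᵢ`, `eᵢ + eⱼ` or `eⱼ − eᵢ` with `1 ≤ i < j ≤ r`. -/
def isPos (r : ℕ) (x : ℤ → ℚ) : Prop :=
  (∃ i, 1 ≤ i ∧ i ≤ r ∧ x = evec i) ∨
  (∃ i j, 1 ≤ i ∧ i < j ∧ j ≤ r ∧ (x = evec i + evec j ∨ x = evec j - evec i))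

/-- `D_K = {d ∈ W_r : α·d is a positive root for every α ∈ K}`. -/
def DD (r : ℕ) (K : Set (ℤ → ℚ)) : Set G :=
  {d | inW r d ∧ ∀ α ∈ K, isPos r (rAct d α)}

/-- `D_{K,L} = D_K ∩ D_L⁻¹`. -/
def DDd (r : ℕ) (K L : Set (ℤ → ℚ)) : Set G := {d | d ∈ DD r K ∧ d⁻¹ ∈ DD r L}

/-- For `M ⊆ Δ₀`, the parabolic subgroup `W_M`, generated by the reflections `s_α`
for `α ∈ M` (the reflection in the hyperplane orthogonal to `αᵢ` is `sᵢ`). -/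
def Wpar (r : ℕ) (M : Set (ℤ → ℚ)) : Subgroup G :=
  Subgroup.closure {w | ∃ i, i < r ∧ sroot i ∈ M ∧ w = s i}

/-- `D^M_{K,L} = D_K ∩ D_L⁻¹ ∩ W_M`. -/
def DDm (r : ℕ) (K L M : Set (ℤ → ℚ)) : Set G := {d | d ∈ DDd r K L ∧ d ∈ Wpar r M}

end QQS
namespace QQS

/- Fix an `a`-bicomposition `λ = (l1, l2)` and a `b`-bicomposition `μ = (m1, m2)` in
`Λ(n,r)`.  The sets of simple roots `J, I ⊆ Δ`, and `Ã, B̃, A, B ⊆ Δ₀`. -/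

/-- `j` is a partial sum of the composition `l`. -/
def isPartialSum (l : List ℕ) (j : ℕ) : Prop := ∃ k, psum l k = j

/-- `{α_{off+j} : 1 ≤ j ≤ l.sum − 1, j not a partial sum of l}`. -/
def compRoots (off : ℕ) (l : List ℕ) : Set (ℤ → ℚ) :=
  {x | ∃ j, 1 ≤ j ∧ j + 1 ≤ l.sum ∧ ¬ isPartialSum l j ∧ x = sroot (off + j)}

/-- `J = J₁ ∪ J₂ ⊆ Δ` associated to the bicomposition `(l1, l2)`. -/
def Jset (l1 l2 : List ℕ) : Set (ℤ → ℚ) := compRoots 0 l1 ∪ compRoots l1.sum l2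

/-- `Ã = Δ₀ ∖ {α_a}` if `a ≠ r`, and `Ã = Δ₀` if `a = r`. -/
def Atil (r a : ℕ) : Set (ℤ → ℚ) := if a = r then Delta0 r else Delta0 r \ {sroot a}

/-- `A = Ã ∖ {α₀}`. -/
def Aset (r a : ℕ) : Set (ℤ → ℚ) := Atil r a \ {sroot 0}

/-- An admissible triple `(d, v, u)` for `(λ, μ)`: `d ∈ D_{B̃,Ã}`,
`v ∈ D^A_{J, B·d ∩ A}` and `u ∈ D^B_{I, B ∩ J·v·d⁻¹}`. -/
def Admissible (r a b : ℕ) (l1 l2 m1 m2 : List ℕ) (d v u : G) : Prop :=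
  d ∈ DDd r (Atil r b) (Atil r a) ∧
  v ∈ DDm r (Jset l1 l2) ((rAct d '' Aset r b) ∩ Aset r a) (Aset r a) ∧
  u ∈ DDm r (Jset m1 m2) (Aset r b ∩ (rAct d⁻¹ '' (rAct v '' Jset l1 l2))) (Aset r b)

end QQS
namespace QQS

/-! ### The group `W_r` -/

lemma apply_inv_apply (x : G) (i : ℤ) : x (x⁻¹ i) = i := x.apply_symm_apply i

lemma inW_one (r : ℕ) : inW r 1 := ⟨fun _ => rfl, fun _ _ => rfl⟩

lemma inW_mul {r : ℕ} {x y : G} (hx : inW r x) (hy : inW r y) : inW r (x * y) := by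
  refine ⟨fun i => ?_, fun i hi => ?_⟩
  · simp only [Equiv.Perm.mul_apply, hy.1, hx.1]
  · rw [Equiv.Perm.mul_apply, hy.2 i hi, hx.2 i hi]

lemma inW_inv {r : ℕ} {x : G} (hx : inW r x) : inW r x⁻¹ := by
  refine ⟨fun i => ?_, fun i hi => ?_⟩
  · rw [Equiv.Perm.inv_eq_iff_eq, hx.1, apply_inv_apply]
  · rw [Equiv.Perm.inv_eq_iff_eq, hx.2 i hi]

lemma inW_bound {r : ℕ} {x : G} (hx : inW r x) {i : ℤ} (hi : |i| ≤ r) : |x i| ≤ r := by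
  by_contra h
  have h1 := x.injective (hx.2 (x i) (not_le.mp h))
  rw [h1] at h
  exact h hi

lemma odd_zero {x : ℤ → ℤ} (hx : ∀ i, x (-i) = -x i) : x 0 = 0 := by
  have := hx 0
  simp only [neg_zero] at this
  omega

/-- A description of `s k` by cases, uniform in `k`: for `k = 0` the third and fourth cases do not
occur, and `0` is fixed. -/
lemma s_cases (k : ℕ) (j : ℤ) :
    (j = k + 1 ∧ s k j = (if k = 0 then -1 else (k : ℤ))) ∨
    (j = -(k + 1) ∧ s k j = (if k = 0 then 1 else -(k : ℤ))) ∨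
    (k ≠ 0 ∧ j = k ∧ s k j = k + 1) ∨ (k ≠ 0 ∧ j = -k ∧ s k j = -(k + 1)) ∨
    (j ≠ k + 1 ∧ j ≠ -(k + 1) ∧ (k = 0 ∨ (j ≠ k ∧ j ≠ -k)) ∧ s k j = j) := by
  rcases Nat.eq_zero_or_pos k with rfl | hk
  · simp only [s, if_true, Equiv.swap_apply_def]
    split_ifs <;> simp <;> omega
  · have hk0 : k ≠ 0 := by omega
    simp only [s, if_neg hk0, Equiv.Perm.mul_apply, Equiv.swap_apply_def]
    split_ifs <;> omega

lemma s_mul_self (k : ℕ) : s k * s k = 1 := by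
  ext j
  rw [Equiv.Perm.mul_apply, Equiv.Perm.one_apply]
  have h1 := s_cases k j
  have h2 := s_cases k (s k j)
  split_ifs at h1 h2 <;> omega

lemma s_inv (k : ℕ) : (s k)⁻¹ = s k := inv_eq_of_mul_eq_one_left (s_mul_self k)

lemma inW_s {r k : ℕ} (hk : k < r) : inW r (s k) := by
  refine ⟨fun j => ?_, fun j hj => ?_⟩
  · have h1 := s_cases k j
    have h2 := s_cases k (-j)
    split_ifs at h1 h2 <;> omega
  · rw [lt_abs] at hj
    have h1 := s_cases k j
    split_ifs at h1 <;> omega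

/-! ### Length and inversions -/

/-- The pairs `p < q` in `[−r, r]` with `p + q ≠ 0` and `p·w > q·w`. They encode the positive roots
made negative by `w`, each one twice. -/
noncomputable def invSet (r : ℕ) (w : G) : Finset (ℤ × ℤ) :=
  (Finset.Icc (-(r : ℤ)) r ×ˢ Finset.Icc (-(r : ℤ)) r).filter
    fun t => t.1 < t.2 ∧ t.1 + t.2 ≠ 0 ∧ w⁻¹ t.2 < w⁻¹ t.1

/-- Twice the number of positive roots made negative by `w`. -/
noncomputable def inv2 (r : ℕ) (w : G) : ℕ := (invSet r w).card

lemma mem_invSet {r : ℕ} {w : G} {p q : ℤ} : (p, q) ∈ invSet r w ↔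
    ((-(r : ℤ) ≤ p ∧ p ≤ r) ∧ -(r : ℤ) ≤ q ∧ q ≤ r) ∧ p < q ∧ p + q ≠ 0 ∧ w⁻¹ q < w⁻¹ p := by
  simp [invSet]

/-- Additivity of the inversion count, when no positive root is made negative by both `x⁻¹`
and `y`. -/
lemma inv2_mul {r : ℕ} {x y : G} (hx : inW r x)
    (h : ∀ p q : ℤ, -(r : ℤ) ≤ p → q ≤ r → p < q → p + q ≠ 0 → x q < x p → y⁻¹ q < y⁻¹ p → False) :
    inv2 r (x * y) = inv2 r x + inv2 r y := by
  have hx' := inW_inv hx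
  have hb : ∀ {w : G}, inW r w → ∀ {i : ℤ}, -(r : ℤ) ≤ i → i ≤ r → -(r : ℤ) ≤ w i ∧ w i ≤ r :=
    fun hw i h1 h2 => abs_le.mp (inW_bound hw (abs_le.mpr ⟨h1, h2⟩))
  have hsum : ∀ {w : G}, inW r w → ∀ p q : ℤ, w p + w q = 0 ↔ p + q = 0 := by
    intro w hw p q
    rw [add_eq_zero_iff_eq_neg, add_eq_zero_iff_eq_neg, ← hw.1, w.injective.eq_iff]
  -- the inversions of `y` pulled back along `x`
  set T := (invSet r y).map ((Equiv.prodCongr x x).toEmbedding) with hT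
  have hTmem : ∀ p q : ℤ, (p, q) ∈ T ↔ (x⁻¹ p, x⁻¹ q) ∈ invSet r y := by
    intro p q
    rw [hT, Finset.mem_map_equiv]
    rfl
  have hunion : invSet r (x * y) = invSet r x ∪ T := by
    ext ⟨p, q⟩
    rw [Finset.mem_union, hTmem, mem_invSet, mem_invSet, mem_invSet, Ne, Ne, hsum hx']
    simp only [mul_inv_rev, Equiv.Perm.mul_apply]
    constructor
    · rintro ⟨⟨⟨a1, a2⟩, a3, a4⟩, a5, a6, a7⟩
      rcases lt_trichotomy (x⁻¹ p) (x⁻¹ q) with hlt | heq | hgt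
      · exact Or.inr ⟨⟨hb hx' a1 a2, hb hx' a3 a4⟩, hlt, a6, a7⟩
      · rw [heq] at a7
        exact absurd a7 (lt_irrefl _)
      · exact Or.inl ⟨⟨⟨a1, a2⟩, a3, a4⟩, a5, a6, hgt⟩
    · rintro (⟨⟨⟨a1, a2⟩, a3, a4⟩, a5, a6, a7⟩ | ⟨⟨⟨a1, a2⟩, a3, a4⟩, a5, a6, a7⟩)
      · refine ⟨⟨⟨a1, a2⟩, a3, a4⟩, a5, a6, ?_⟩
        by_contra hcon
        have hne : y⁻¹ (x⁻¹ p) ≠ y⁻¹ (x⁻¹ q) := fun e =>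
          a5.ne (x⁻¹.injective (y⁻¹.injective e))
        refine h (x⁻¹ q) (x⁻¹ p) (hb hx' a3 a4).1 (hb hx' a1 a2).2 a7 ?_ ?_ (by omega)
        · rw [Ne, hsum hx']; omega
        · simpa using a5
      · have b1 := hb hx a1 a2
        have b2 := hb hx a3 a4
        simp only [apply_inv_apply] at b1 b2
        refine ⟨⟨b1, b2⟩, ?_, a6, a7⟩
        by_contra hcon
        have hne : p ≠ q := by rintro rfl; exact lt_irrefl _ a5
        refine h (x⁻¹ p) (x⁻¹ q) a1 a4 a5 (by rwa [Ne, hsum hx']) ?_ a7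
        simp only [apply_inv_apply]
        omega
  have hdisj : Disjoint (invSet r x) T := by
    rw [Finset.disjoint_left]
    rintro ⟨p, q⟩ h1 h2
    rw [hTmem] at h2
    rw [mem_invSet] at h1 h2
    omega
  rw [inv2, hunion, Finset.card_union_of_disjoint hdisj, hT, Finset.card_map]
  rfl

lemma s_inversion {k : ℕ} {p q : ℤ} (hpq : p < q) (hne : p + q ≠ 0) (h : s k q < s k p) :
    (p = k ∧ q = k + 1) ∨ (p = -(k + 1) ∧ q = -k) := by
  have h1 := s_cases k p
  have h2 := s_cases k q
  split_ifs at h1 h2 <;> omega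

lemma inv2_s {r k : ℕ} (hk : k < r) : inv2 r (s k) = 2 := by
  have : invSet r (s k) = {((k : ℤ), (k : ℤ) + 1), (-((k : ℤ) + 1), -(k : ℤ))} := by
    ext ⟨p, q⟩
    rw [mem_invSet, s_inv, Finset.mem_insert, Finset.mem_singleton, Prod.mk.injEq, Prod.mk.injEq]
    constructor
    · rintro ⟨-, h1, h2, h3⟩
      exact s_inversion h1 h2 h3
    · intro h
      have h1 := s_cases k p
      have h2 := s_cases k q
      split_ifs at h1 h2 <;> omega
  rw [inv2, this, Finset.card_pair]
  simp only [Ne, Prod.mk.injEq]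
  omega

lemma inv2_s_mul {r k : ℕ} {w : G} (hk : k < r) (hw : inW r w) (h : w⁻¹ k < w⁻¹ (k + 1)) :
    inv2 r (s k * w) = inv2 r w + 2 := by
  rw [inv2_mul (inW_s hk), inv2_s hk, add_comm]
  intro p q _ _ hpq hne h1 h2
  rcases s_inversion hpq hne h1 with ⟨rfl, rfl⟩ | ⟨rfl, rfl⟩
  · omega
  · rw [(inW_inv hw).1, (inW_inv hw).1] at h2
    omega

lemma s_mul_s_mul (k : ℕ) (w : G) : s k * (s k * w) = w := by
  rw [← mul_assoc, s_mul_self, one_mul]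

lemma inv2_s_mul_of_gt {r k : ℕ} {w : G} (hk : k < r) (hw : inW r w)
    (h : w⁻¹ (k + 1) < w⁻¹ k) : inv2 r w = inv2 r (s k * w) + 2 := by
  have hw' := inW_inv hw
  have h0 := odd_zero hw'.1
  have hneg := hw'.1 1
  conv_lhs => rw [← s_mul_s_mul k w]
  refine inv2_s_mul hk (inW_mul (inW_s hk) hw) ?_
  simp only [mul_inv_rev, s_inv, Equiv.Perm.mul_apply]
  rcases Nat.eq_zero_or_pos k with rfl | hk0
  · have e1 : s 0 ((0 : ℕ) : ℤ) = 0 := by simp [s, Equiv.swap_apply_def]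
    have e2 : s 0 (((0 : ℕ) : ℤ) + 1) = -1 := by simp [s]
    rw [e1, e2]
    simp only [Nat.cast_zero, zero_add] at h
    omega
  · have e1 : s k (k : ℤ) = k + 1 := by
      have h1 := s_cases k k
      split_ifs at h1 <;> omega
    have e2 : s k ((k : ℤ) + 1) = k := by
      have h1 := s_cases k ((k : ℤ) + 1)
      split_ifs at h1 <;> omega
    rwa [e1, e2]

/-- An element of `W_r` keeping all simple roots positive is the identity. -/
lemma eq_one_of_increasing {r : ℕ} {w : G} (hw : inW r w)
    (h : ∀ k : ℕ, k < r → w⁻¹ k < w⁻¹ (k + 1)) : w = 1 := by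
  have hw' := inW_inv hw
  have hge : ∀ k : ℕ, k ≤ r → (k : ℤ) ≤ w⁻¹ k := by
    intro k
    induction k with
    | zero => intro _; simp [odd_zero hw'.1]
    | succ k ih =>
      intro hk
      have h1 := ih (by omega)
      have h2 := h k (by omega)
      push_cast
      omega
  have hle : ∀ m : ℕ, ∀ k : ℕ, k + m = r → w⁻¹ k ≤ k := by
    intro m
    induction m with
    | zero =>
      intro k hk
      have := abs_le.mp (inW_bound hw' (i := (k : ℤ)) (by rw [abs_le]; omega))
      omega
    | succ m ih =>
      intro k hk
      have h1 := ih (k + 1) (by omega)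
      have h2 := h k (by omega)
      push_cast at h1
      omega
  have heq : ∀ k : ℕ, w⁻¹ k = k := by
    intro k
    rcases le_or_gt k r with hk | hk
    · exact le_antisymm (hle (r - k) k (by omega)) (hge k hk)
    · exact hw'.2 _ (by rw [lt_abs]; omega)
  rw [← inv_eq_one]
  ext i
  rw [Equiv.Perm.one_apply]
  rcases Int.eq_nat_or_neg i with ⟨n, rfl | rfl⟩
  · exact heq n
  · rw [hw'.1, heq]

lemma inv2_one (r : ℕ) : inv2 r 1 = 0 := by
  rw [inv2, Finset.card_eq_zero, Finset.eq_empty_iff_forall_notMem]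
  rintro ⟨p, q⟩ h
  rw [mem_invSet] at h
  simp only [inv_one, Equiv.Perm.one_apply] at h
  omega

lemma exists_word {r : ℕ} : ∀ (m : ℕ) {w : G}, inW r w → inv2 r w = m →
    ∃ l : List G, 2 * l.length = inv2 r w ∧ (∀ x ∈ l, x ∈ gens r) ∧ l.prod = w := by
  intro m
  induction m using Nat.strong_induction_on with
  | _ m ih =>
    intro w hw hm
    by_cases h : ∀ k : ℕ, k < r → w⁻¹ k < w⁻¹ (k + 1)
    · obtain rfl := eq_one_of_increasing hw h
      exact ⟨[], by simp [inv2_one], by simp, rfl⟩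
    · push Not at h
      obtain ⟨k, hk, hle⟩ := h
      have hne : w⁻¹ ((k : ℤ) + 1) ≠ w⁻¹ k := fun e => by
        have := w⁻¹.injective e
        omega
      have h2 := inv2_s_mul_of_gt hk hw (lt_of_le_of_ne hle hne)
      obtain ⟨l, hl1, hl2, hl3⟩ := ih _ (by omega) (inW_mul (inW_s hk) hw) rfl
      refine ⟨s k :: l, ?_, ?_, ?_⟩
      · rw [List.length_cons]; omega
      · intro x hx
        rcases List.mem_cons.mp hx with rfl | hx
        · exact ⟨k, hk, rfl⟩
        · exact hl2 x hx
      · rw [List.prod_cons, hl3, s_mul_s_mul]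

lemma inv2_le_of_word {r : ℕ} : ∀ l : List G, (∀ x ∈ l, x ∈ gens r) →
    inW r l.prod ∧ inv2 r l.prod ≤ 2 * l.length := by
  intro l
  induction l with
  | nil => intro _; exact ⟨inW_one r, by simp [inv2_one]⟩
  | cons x l ih =>
    intro hl
    obtain ⟨h1, h2⟩ := ih fun y hy => hl y (List.mem_cons_of_mem _ hy)
    obtain ⟨k, hk, rfl⟩ := hl x List.mem_cons_self
    rw [List.prod_cons, List.length_cons]
    refine ⟨inW_mul (inW_s hk) h1, ?_⟩
    rcases lt_trichotomy (l.prod⁻¹ k) (l.prod⁻¹ ((k : ℤ) + 1)) with h | h | h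
    · have := inv2_s_mul hk h1 h
      omega
    · have := l.prod⁻¹.injective h
      omega
    · have := inv2_s_mul_of_gt hk h1 h
      omega

/-- The length of `w` is the number of positive roots made negative by `w`. -/
lemma two_mul_len {r : ℕ} {w : G} (hw : inW r w) : 2 * len r w = inv2 r w := by
  obtain ⟨l, hl1, hl2, hl3⟩ := exists_word _ hw rfl
  have hmem : l.length ∈
      {n | ∃ l : List G, l.length = n ∧ (∀ x ∈ l, x ∈ gens r) ∧ l.prod = w} :=
    ⟨l, rfl, hl2, hl3⟩
  have hle : len r w ≤ l.length := Nat.sInf_le hmem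
  obtain ⟨l', h1, h2, h3⟩ := Nat.sInf_mem ⟨_, hmem⟩
  have h4 := (inv2_le_of_word l' h2).2
  rw [h3, h1] at h4
  change _ ≤ 2 * len r w at h4
  omega

/-! ### Simple roots and positivity -/

/-- `e_x` for `x ∈ ℤ`, with `e_{−x} = −e_x` for `x ≠ 0`. At `x = 0` it is the indicator of `0`,
which vanishes at all nonzero indices. -/
def E (x : ℤ) : ℤ → ℚ := fun j => if j = x then 1 else if j = -x then -1 else 0

lemma E_neg {x : ℤ} (hx : x ≠ 0) : E (-x) = -E x := by
  funext j
  simp only [E, Pi.neg_apply]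
  split_ifs <;> first | omega | norm_num

lemma sroot_eq {k : ℕ} (hk : 1 ≤ k) : sroot k = E ((k : ℤ) + 1) - E k := by
  obtain ⟨k, rfl⟩ := Nat.exists_eq_add_of_le' hk
  funext j
  simp only [sroot, evec, E, Pi.sub_apply]
  push_cast
  ring_nf

lemma rAct_sub (w : G) (x y : ℤ → ℚ) : rAct w (x - y) = rAct w x - rAct w y := rfl

lemma rAct_E {w : G} (hw : ∀ i : ℤ, w (-i) = -(w i)) (x : ℤ) : rAct w (E x) = E (w⁻¹ x) := by
  funext j
  have h1 : w j = x ↔ j = w⁻¹ x := by rw [eq_comm (a := j), Equiv.Perm.inv_eq_iff_eq, eq_comm]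
  have h2 : w j = -x ↔ j = -(w⁻¹ x) := by
    rw [← neg_eq_iff_eq_neg, ← hw, ← neg_eq_iff_eq_neg, eq_comm (a := -j),
      Equiv.Perm.inv_eq_iff_eq, eq_comm]
  simp only [rAct, E, h1, h2]

/-- The linear functional `e_j ↦ j`, which is positive on the positive roots. -/
noncomputable def ht (r : ℕ) (x : ℤ → ℚ) : ℚ := ∑ j ∈ Finset.Icc (1 : ℤ) r, (j : ℚ) * x j

lemma ht_E {r : ℕ} {x : ℤ} (hx : |x| ≤ r) : ht r (E x) = x := by
  rw [abs_le] at hx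
  rcases lt_trichotomy x 0 with h | rfl | h
  · rw [ht, Finset.sum_eq_single (-x)]
    · have : -x ≠ x := by omega
      simp [E, this]
    · intro j hj hne
      rw [Finset.mem_Icc] at hj
      have : j ≠ x := by omega
      simp [E, this, hne]
    · intro hn
      exact absurd (Finset.mem_Icc.mpr (by omega)) hn
  · rw [ht, Finset.sum_eq_zero]
    · simp
    · intro j hj
      rw [Finset.mem_Icc] at hj
      have : j ≠ 0 := by omega
      simp [E, this]
  · rw [ht, Finset.sum_eq_single x]
    · simp [E]
    · intro j hj hne
      rw [Finset.mem_Icc] at hj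
      have : j ≠ -x := by omega
      simp [E, this, hne]
    · intro hn
      exact absurd (Finset.mem_Icc.mpr (by omega)) hn

lemma ht_add (r : ℕ) (x y : ℤ → ℚ) : ht r (x + y) = ht r x + ht r y := by
  simp [ht, mul_add, Finset.sum_add_distrib]

lemma ht_sub (r : ℕ) (x y : ℤ → ℚ) : ht r (x - y) = ht r x - ht r y := by
  simp [ht, mul_sub, Finset.sum_sub_distrib]

lemma ht_evec {r i : ℕ} (hi : i ≤ r) : ht r (evec i) = i := by
  have := ht_E (r := r) (x := (i : ℤ)) (by rw [abs_le]; omega)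
  exact_mod_cast this

lemma ht_pos {r : ℕ} {x : ℤ → ℚ} (h : isPos r x) : 0 < ht r x := by
  rcases h with ⟨i, h1, h2, rfl⟩ | ⟨i, j, h1, h2, h3, rfl | rfl⟩
  · rw [ht_evec h2]
    exact_mod_cast h1
  · rw [ht_add, ht_evec h3, ht_evec (by omega)]
    exact_mod_cast (by omega : 0 < i + j)
  · rw [ht_sub, ht_evec h3, ht_evec (by omega), sub_pos]
    exact_mod_cast h2

lemma lt_of_isPos {r k : ℕ} {w : G} (hw : inW r w) (hk : k < r) (hk1 : 1 ≤ k)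
    (h : isPos r (rAct w (sroot k))) : w⁻¹ k < w⁻¹ (k + 1) := by
  have h1 := ht_pos h
  have hw' := inW_inv hw
  rw [sroot_eq hk1, rAct_sub, rAct_E hw.1, rAct_E hw.1, ht_sub,
    ht_E (inW_bound hw' (by rw [abs_le]; omega)), ht_E (inW_bound hw' (by rw [abs_le]; omega)),
    sub_pos] at h1
  exact_mod_cast h1

lemma sroot_injective {i j : ℕ} (h : sroot i = sroot j) : i = j := by
  -- `i + 1` is the only positive index at which `sroot i` takes the value `1`
  have key : ∀ k m : ℕ, sroot k ((m : ℤ) + 1) = 1 ↔ k = m := by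
    intro k m
    cases k with
    | zero =>
      simp only [sroot, evec]
      split_ifs <;> norm_num <;> omega
    | succ k =>
      simp only [sroot, evec, Pi.sub_apply]
      push_cast
      split_ifs <;> norm_num <;> omega
  exact ((key j i).mp (h ▸ (key i i).mpr rfl)).symm

lemma sroot_mem_Aset {r a k : ℕ} (h1 : 1 ≤ k) (h2 : k < r) (h3 : k ≠ a) :
    sroot k ∈ Aset r a := by
  have hk : sroot k ∈ Delta0 r := ⟨k, h2, rfl⟩
  refine ⟨?_, fun h => ?_⟩
  · unfold Atil
    split_ifs
    · exact hk
    · exact ⟨hk, fun h => h3 (sroot_injective h)⟩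
  · have := sroot_injective h
    omega

lemma of_sroot_mem_Aset {r a k : ℕ} (h2 : k < r) (h : sroot k ∈ Aset r a) : 1 ≤ k ∧ k ≠ a := by
  obtain ⟨h3, h4⟩ := h
  refine ⟨?_, ?_⟩
  · rcases Nat.eq_zero_or_pos k with rfl | hk
    · exact absurd rfl h4
    · exact hk
  · rintro rfl
    rw [Atil, if_neg h2.ne] at h3
    exact h3.2 rfl

/-! ### Blocks -/

/-- For `p < q`: both entries lie in one of the blocks `±{1,…,b}`, `±{b+1,…,r}`. -/
def SameBlock (r b : ℕ) (p q : ℤ) : Prop :=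
  (1 ≤ p ∧ q ≤ b) ∨ (b + 1 ≤ p ∧ q ≤ r) ∨ (1 ≤ -q ∧ -p ≤ b) ∨ (b + 1 ≤ -q ∧ -p ≤ r)

/-- `w` preserves signs and the blocks `{1,…,b}` and `{b+1,…}`. -/
def BlockPres (b : ℕ) (w : G) : Prop := ∀ x : ℤ, (0 < w x ↔ 0 < x) ∧ ((b : ℤ) < w x ↔ b < x)

lemma blockPres_of_mem_Wpar {r b : ℕ} {w : G} (h : w ∈ Wpar r (Aset r b)) : BlockPres b w := by
  refine Subgroup.closure_induction ?_ ?_ ?_ ?_ h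
  · rintro _ ⟨k, hk, hmem, rfl⟩ x
    obtain ⟨h1, h2⟩ := of_sroot_mem_Aset hk hmem
    have := s_cases k x
    split_ifs at this <;> omega
  · intro x
    simp
  · intro x y _ _ hx hy j
    have h1 := hx (y j)
    have h2 := hy j
    rw [Equiv.Perm.mul_apply]
    tauto
  · intro x _ hx j
    have h1 := hx (x⁻¹ j)
    rw [apply_inv_apply] at h1
    tauto

/-- The positive roots made negative by an element of `W_B` lie in the span of `B`. -/
lemma BlockPres.sameBlock {r b : ℕ} {w : G} (hb : BlockPres b w)
    (hw : ∀ i : ℤ, w (-i) = -(w i)) {p q : ℤ} (hpq : p < q) (h : w q < w p)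
    (hp : -(r : ℤ) ≤ p) (hq : q ≤ r) : SameBlock r b p q := by
  have h1 := hb p
  have h2 := hb q
  have h3 := hb (-p)
  have h4 := hb (-q)
  rw [hw] at h3 h4
  unfold SameBlock
  omega

/-- A map keeping the simple roots of `B` positive keeps the positive roots spanned by `B`
positive. -/
lemma lt_of_sameBlock {r b : ℕ} {f : ℤ → ℤ} (hf : ∀ i : ℤ, f (-i) = -(f i))
    (hbr : b ≤ r) (h : ∀ k : ℕ, 1 ≤ k → k < r → k ≠ b → f k < f (k + 1)) {p q : ℤ} (hpq : p < q)
    (hsb : SameBlock r b p q) : f p < f q := by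
  have key : ∀ m k : ℕ, 1 ≤ k → k + m + 1 ≤ r → (k + m + 1 ≤ b ∨ b < k) →
      f k < f (k + m + 1) := by
    intro m
    induction m with
    | zero =>
      intro k h1 h2 h3
      simpa using h k h1 (by omega) (by omega)
    | succ m ih =>
      intro k h1 h2 h3
      have h4 := ih k h1 (by omega) (by omega)
      have h5 := h (k + m + 1) (by omega) (by omega) (by omega)
      push_cast at h5 ⊢
      rw [show (k : ℤ) + (m + 1) + 1 = k + m + 1 + 1 by ring]
      omega
  have key' : ∀ p q : ℤ, p < q → 1 ≤ p → q ≤ r → (q ≤ b ∨ b < p) → f p < f q := by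
    intro p q h1 h2 h3 h4
    have h5 := key (q - p - 1).toNat p.toNat (by omega) (by omega) (by omega)
    rwa [show (p.toNat : ℤ) = p by omega,
      show p + ((q - p - 1).toNat : ℤ) + 1 = q by omega] at h5
  unfold SameBlock at hsb
  rcases lt_or_ge 0 p with hp | hp
  · exact key' p q hpq (by omega) (by omega) (by omega)
  · have := key' (-q) (-p) (by omega) (by omega) (by omega) (by omega)
    rw [hf, hf] at this
    omega

/-- Let `(d,v,u)` be an admissible triple for `(λ,μ)`.  Then `ℓ(udv⁻¹) = ℓ(u) + ℓ(d) + ℓ(v⁻¹)`. -/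
theorem length_udv_inv (n r a b : ℕ) (l1 l2 m1 m2 : List ℕ)
    (hla : l1.sum = a) (hlr : l1.sum + l2.sum = r) (hln : l1.length + l2.length = n)
    (hmb : m1.sum = b) (hmr : m1.sum + m2.sum = r) (hmn : m1.length + m2.length = n)
    (d v u : G) (hadm : Admissible r a b l1 l2 m1 m2 d v u) :
    len r (u * d * v⁻¹) = len r u + len r d + len r v⁻¹ := by
  obtain ⟨⟨⟨hd, hdB⟩, -, hdA⟩, ⟨⟨⟨hv, -⟩, -, hvA⟩, hvW⟩, ⟨⟨⟨hu, -⟩, -⟩, huW⟩⟩ := hadm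
  have hd' := inW_inv hd
  have hv' := inW_inv hv
  have hvb := blockPres_of_mem_Wpar hvW
  have hub := blockPres_of_mem_Wpar huW
  have hdinc : ∀ k : ℕ, 1 ≤ k → k < r → k ≠ a → d k < d (k + 1) := by
    intro k h1 h2 h3
    simpa using lt_of_isPos hd' h2 h1 (hdA _ (sroot_mem_Aset h1 h2 h3).1)
  have hdmono := fun p q => lt_of_sameBlock (r := r) (b := a) hd.1 (by omega) hdinc (p := p) (q := q)
  -- `d v⁻¹` keeps every simple root of `B` positive
  have hyinc : ∀ k : ℕ, 1 ≤ k → k < r → k ≠ b → (v * d⁻¹) k < (v * d⁻¹) (k + 1) := by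
    intro k h1 h2 h3
    have hkB := sroot_mem_Aset (r := r) h1 h2 h3
    have hlt := lt_of_isPos hd h2 h1 (hdB _ hkB.1)
    simp only [Equiv.Perm.mul_apply]
    by_contra hcon
    have hne : v (d⁻¹ (k : ℤ)) ≠ v (d⁻¹ ((k : ℤ) + 1)) := by
      intro h
      have := d⁻¹.injective (v.injective h)
      omega
    have hx := inW_bound hd' (i := (k : ℤ)) (by rw [abs_le]; omega)
    have hy := inW_bound hd' (i := (k : ℤ) + 1) (by rw [abs_le]; omega)
    rw [abs_le] at hx hy
    have hsb := hvb.sameBlock hv.1 hlt (by omega) hx.1 hy.2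
    obtain ⟨x, hxe⟩ : ∃ x, x = d⁻¹ (k : ℤ) := ⟨_, rfl⟩
    obtain ⟨y, hye⟩ : ∃ y, y = d⁻¹ ((k : ℤ) + 1) := ⟨_, rfl⟩
    have hdx : d x = k := by simp [hxe]
    have hdy : d y = k + 1 := by simp [hye]
    rw [← hxe, ← hye] at hlt hsb hne hcon
    rw [← hxe] at hx
    rw [← hye] at hy
    -- `d` is strictly increasing on the block containing `x < y` and `d y = d x + 1`
    have hxy : y = x + 1 := by
      by_contra hxy
      have h4 := hdmono x (x + 1) (by omega) (by unfold SameBlock at *; omega)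
      have h5 := hdmono (x + 1) y (by omega) (by unfold SameBlock at *; omega)
      omega
    have hact : rAct d (sroot k) = E y - E x := by
      rw [sroot_eq h1, rAct_sub, rAct_E hd.1, rAct_E hd.1, hxe, hye]
    have hpos : 0 < x ∨ y < 0 := by unfold SameBlock at hsb; omega
    rcases hpos with hpos | hpos
    · obtain ⟨p, rfl⟩ := Int.eq_ofNat_of_zero_le hpos.le
      have hp1 : 1 ≤ p := by omega
      have hpr : p < r := by unfold SameBlock at hsb; omega
      have hpa : p ≠ a := by unfold SameBlock at hsb; omega
      have hmem : sroot p ∈ (rAct d '' Aset r b) ∩ Aset r a :=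
        ⟨⟨_, hkB, by rw [hact, hxy, sroot_eq hp1]⟩, sroot_mem_Aset hp1 hpr hpa⟩
      have h6 := lt_of_isPos hv' hpr hp1 (hvA _ hmem)
      rw [inv_inv] at h6
      rw [hxy] at hcon
      exact hcon h6
    · obtain ⟨p, hp⟩ := Int.eq_ofNat_of_zero_le (a := -y) (by omega)
      obtain rfl : y = -(p : ℤ) := by omega
      obtain rfl : x = -((p : ℤ) + 1) := by omega
      have hp1 : 1 ≤ p := by omega
      have hpr : p < r := by unfold SameBlock at hsb; omega
      have hpa : p ≠ a := by unfold SameBlock at hsb; omega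
      have hmem : sroot p ∈ (rAct d '' Aset r b) ∩ Aset r a := by
        refine ⟨⟨_, hkB, ?_⟩, sroot_mem_Aset hp1 hpr hpa⟩
        rw [hact, sroot_eq hp1, E_neg (by omega), E_neg (by omega)]
        ring
      have h6 := lt_of_isPos hv' hpr hp1 (hvA _ hmem)
      rw [inv_inv] at h6
      rw [hv.1, hv.1] at hcon
      omega
  have hymono := fun p q => lt_of_sameBlock (r := r) (b := b) (f := ⇑(v * d⁻¹))
    (inW_mul hv hd').1 (by omega) hyinc (p := p) (q := q)
  have hdv : inv2 r (d * v⁻¹) = inv2 r d + inv2 r v⁻¹ := by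
    refine inv2_mul hd ?_
    intro p q hpr hqr hpq _ h1 h2
    rw [inv_inv] at h2
    have := hdmono p q hpq (hvb.sameBlock hv.1 hpq h2 hpr hqr)
    omega
  have hudv : inv2 r (u * (d * v⁻¹)) = inv2 r u + inv2 r (d * v⁻¹) := by
    refine inv2_mul hu ?_
    intro p q hpr hqr hpq _ h1 h2
    have := hymono p q hpq (hub.sameBlock hu.1 hpq h1 hpr hqr)
    rw [mul_inv_rev, inv_inv] at h2
    omega
  have e1 := two_mul_len (inW_mul hu (inW_mul hd hv'))
  have e2 := two_mul_len hu
  have e3 := two_mul_len hd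
  have e4 := two_mul_len hv'
  rw [mul_assoc]
  omega

end QQS
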